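/- Let X^n, Y^n be finite-valued random sequences whose joint distribution factors as P(x^n, y^n) = Q(x_1^k||y_1^{k-1}) Q(x_{k+1}^n||y_{k+1}^{n-1}) P(y^n||x^n), i.e., the input causal conditioning distribution splits into independent blocks (X_1^k depending only on (x^{i-1}, y^{i-1}) within the first block, and X_{k+1}^n depending only on the second block's past). Then the directed information satisfies I(X^n -> Y^n) >= I(X^k -> Y^k) + I(X_{k+1}^n -> Y_{k+1}^n). -/

import Mathlib

/-- `Q` is a causal conditioning input distribution `Q(x^n ‖ y^{n-1})`:
nonnegative, normalized for every `y^n`, and the marginal of any length-`i`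
prefix of `x^n` depends on `y^n` only through its first `i-1` coordinates. -/
def IsCausalIn {X Y : Type} [Fintype X] [DecidableEq X] [Fintype Y] (n : ℕ)
    (Q : (Fin n → X) → (Fin n → Y) → ℝ) : Prop :=
  (∀ x y, 0 ≤ Q x y) ∧ (∀ y, ∑ x, Q x y = 1) ∧
  ∀ (i : ℕ), i ≤ n → ∀ (x : Fin n → X) (y y' : Fin n → Y),
    (∀ j : Fin n, (j : ℕ) + 1 < i → y j = y' j) →
    (∑ x' ∈ Finset.univ.filter
        (fun x' : Fin n → X => ∀ j : Fin n, (j : ℕ) < i → x' j = x j), Q x' y) =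
      ∑ x' ∈ Finset.univ.filter
        (fun x' : Fin n → X => ∀ j : Fin n, (j : ℕ) < i → x' j = x j), Q x' y'

/-- `P` is a channel causal conditioning distribution `P(y^n ‖ x^n)`:
nonnegative, normalized for every `x^n`, and the marginal of any length-`i`
prefix of `y^n` depends on `x^n` only through its first `i` coordinates. -/
def IsCausalCh {X Y : Type} [Fintype X] [Fintype Y] [DecidableEq Y] (n : ℕ)
    (P : (Fin n → Y) → (Fin n → X) → ℝ) : Prop :=
  (∀ y x, 0 ≤ P y x) ∧ (∀ x, ∑ y, P y x = 1) ∧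
  ∀ (i : ℕ), i ≤ n → ∀ (y : Fin n → Y) (x x' : Fin n → X),
    (∀ j : Fin n, (j : ℕ) < i → x j = x' j) →
    (∑ y' ∈ Finset.univ.filter
        (fun y' : Fin n → Y => ∀ j : Fin n, (j : ℕ) < i → y' j = y j), P y' x) =
      ∑ y' ∈ Finset.univ.filter
        (fun y' : Fin n → Y => ∀ j : Fin n, (j : ℕ) < i → y' j = y j), P y' x'

/-- Directed information functional
`I(Q;P) = ∑_{x^n,y^n} Q(x^n‖y^{n-1}) P(y^n‖x^n) log (P(y^n‖x^n) / ∑_{x'} Q(x'‖y^{n-1}) P(y^n‖x'))`. -/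
noncomputable def DI {X Y : Type} [Fintype X] [Fintype Y] (n : ℕ)
    (Q : (Fin n → X) → (Fin n → Y) → ℝ)
    (P : (Fin n → Y) → (Fin n → X) → ℝ) : ℝ :=
  ∑ x, ∑ y, Q x y * P y x * Real.log (P y x / ∑ x', Q x' y * P y x')


/-- Conditional mutual information `I(f(ω); g(ω) | h(ω))` of finite-valued random
variables under the pmf `p` on a finite sample space `Ω`, defined by the usual sum
`∑ q(a,b,c) log (q(a,b,c) q(c) / (q(a,c) q(b,c)))`. -/
noncomputable def condMI {Ω A B C : Type} [Fintype Ω] [Fintype A] [Fintype B] [Fintype C]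
    [DecidableEq A] [DecidableEq B] [DecidableEq C]
    (p : Ω → ℝ) (f : Ω → A) (g : Ω → B) (h : Ω → C) : ℝ :=
  ∑ a : A, ∑ b : B, ∑ c : C,
    (∑ ω ∈ Finset.univ.filter (fun ω => f ω = a ∧ g ω = b ∧ h ω = c), p ω) *
      Real.log
        (((∑ ω ∈ Finset.univ.filter (fun ω => f ω = a ∧ g ω = b ∧ h ω = c), p ω) *
            (∑ ω ∈ Finset.univ.filter (fun ω => h ω = c), p ω)) /
          ((∑ ω ∈ Finset.univ.filter (fun ω => f ω = a ∧ h ω = c), p ω) *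
            (∑ ω ∈ Finset.univ.filter (fun ω => g ω = b ∧ h ω = c), p ω)))

/-! Summing the chain rule gives Kim's identity
`I(X^n → Y^n) = H(Y^n) + H(X^n ‖ Y^{n-1}) - H(X^n, Y^n)`, where
`H(X^n ‖ Y^{n-1}) = ∑ i, H(X_i | X^{i-1}, Y^{i-1})`. When the input law splits into blocks, each
input of the second block is conditionally independent of the first block given the past of the
second block, so the causally conditioned entropy is the sum of those of the two blocks. The
superadditivity defect is therefore `I(X^k, Y^k; X_{k+1}^n, Y_{k+1}^n) - I(Y^k; Y_{k+1}^n)`, which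
is nonnegative by data processing, a consequence of the submodularity of entropy. -/

open Finset

section PartitionEntropy

variable {Ω : Type*} [Fintype Ω]

open Classical in
/-- The total weight of the class of `ω` in the partition `r`, i.e. the probability that the random
variable generating `r` takes the value it has at `ω`. Partitions are encoded as setoids, so that
`r ⊓ s` is the joint partition of `r` and `s`. -/
noncomputable def classSum (w : Ω → ℝ) (r : Setoid Ω) (ω : Ω) : ℝ :=
  ∑ ω' with r ω' ω, w ω'

/-- The Shannon entropy of the partition `r` under the weights `p`. The entropy of a random
variable `f` is `partitionEntropy p (Setoid.ker f)`. -/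
noncomputable def partitionEntropy (p : Ω → ℝ) (r : Setoid Ω) : ℝ :=
  -∑ ω, p ω * Real.log (classSum p r ω)

variable {p w : Ω → ℝ} {r s t u : Setoid Ω}

lemma classSum_nonneg (hw : ∀ ω, 0 ≤ w ω) (ω : Ω) : 0 ≤ classSum w r ω :=
  sum_nonneg fun ω' _ => hw ω'

lemma le_classSum (hw : ∀ ω, 0 ≤ w ω) (ω : Ω) : w ω ≤ classSum w r ω :=
  single_le_sum (fun ω' _ => hw ω') (by simp)

lemma classSum_congr {x y : Ω} (h : r x y) : classSum w r x = classSum w r y := by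
  classical
  exact sum_congr (filter_congr fun ω _ => ⟨fun hω => r.trans hω h,
    fun hω => r.trans hω (r.symm h)⟩) fun _ _ => rfl

lemma classSum_eq_self (w : Ω → ℝ) {x : Ω} (h : ∀ ω, r ω x → ω = x) : classSum w r x = w x := by
  classical
  exact sum_eq_single_of_mem x (by simp)
    fun ω hω hne => absurd (h ω (mem_filter.1 hω).2) hne

lemma sum_mul_classSum (v w : Ω → ℝ) (r : Setoid Ω) :
    ∑ ω, v ω * classSum w r ω = ∑ ω, classSum v r ω * w ω := by
  classical
  simp only [classSum, mul_sum, sum_mul]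
  exact sum_comm' fun x y => by simp [r.comm']

lemma classSum_eq_sum_inf_ker {B : Type*} [Fintype B] (w : Ω → ℝ) (r : Setoid Ω) (f : Ω → B)
    {x : Ω} (rep : B → Ω) (hr : ∀ b, r (rep b) x) (hf : ∀ b, f (rep b) = b) :
    classSum w r x = ∑ b, classSum w (r ⊓ Setoid.ker f) (rep b) := by
  classical
  rw [classSum, ← sum_fiberwise (g := f)]
  refine sum_congr rfl fun b _ => ?_
  rw [filter_filter]
  refine sum_congr (filter_congr fun ω _ => ?_) fun _ _ => rfl
  rw [Setoid.inf_iff_and, Setoid.ker_def, hf]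
  exact and_congr_left fun _ =>
    ⟨fun h => r.trans h (r.symm (hr b)), fun h => r.trans h (hr b)⟩

lemma partitionEntropy_add_sub_add (hp : ∀ ω, 0 ≤ p ω) (r s t u : Setoid Ω) :
    partitionEntropy p r + partitionEntropy p s -
        (partitionEntropy p t + partitionEntropy p u) =
      ∑ ω, p ω * Real.log
        (classSum p t ω * classSum p u ω / (classSum p r ω * classSum p s ω)) := by
  have log_term : ∀ ω, p ω * Real.log
      (classSum p t ω * classSum p u ω / (classSum p r ω * classSum p s ω)) =
        p ω * Real.log (classSum p t ω) + p ω * Real.log (classSum p u ω) -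
          (p ω * Real.log (classSum p r ω) + p ω * Real.log (classSum p s ω)) := by
    intro ω
    rcases (hp ω).eq_or_lt with hω | hω
    · simp [← hω]
    · have class_ne (v : Setoid Ω) : classSum p v ω ≠ 0 := (hω.trans_le (le_classSum hp ω)).ne'
      rw [Real.log_div (mul_ne_zero (class_ne t) (class_ne u))
        (mul_ne_zero (class_ne r) (class_ne s)), Real.log_mul (class_ne t) (class_ne u),
        Real.log_mul (class_ne r) (class_ne s)]
      ring
  simp only [log_term, sum_sub_distrib, sum_add_distrib, partitionEntropy]
  ring

lemma partitionEntropy_add_eq (hp : ∀ ω, 0 ≤ p ω)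
    (h : ∀ ω, classSum p r ω * classSum p s ω = classSum p t ω * classSum p u ω) :
    partitionEntropy p r + partitionEntropy p s =
      partitionEntropy p t + partitionEntropy p u := by
  rw [← sub_eq_zero, partitionEntropy_add_sub_add hp]
  refine sum_eq_zero fun ω _ => ?_
  rw [h ω, Real.log_div_self, mul_zero]

/-- The left-hand side adds up the masses of the classes of `s` that meet the class of `x` in `r`;
all of them lie in the class of `x` in `t`. -/
lemma classSum_mul_div_le (hp : ∀ ω, 0 ≤ p ω) (hr : r ≤ t) (hs : s ≤ t) (x : Ω) :
    classSum (fun ω => p ω / classSum p (r ⊓ s) ω * classSum p s ω) r x ≤ classSum p t x := by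
  classical
  have class_le_one (y : Ω) :
      ∑ ω with r ω x ∧ s ω y, p ω / classSum p (r ⊓ s) ω ≤ if t y x then 1 else 0 := by
    rcases (filter (fun ω => r ω x ∧ s ω y) univ).eq_empty_or_nonempty with h | ⟨z, hz⟩
    · rw [h, sum_empty]; positivity
    · obtain ⟨hzx, hzy⟩ := (mem_filter.1 hz).2
      rw [if_pos (t.trans (t.symm (hs hzy)) (hr hzx))]
      have class_eq : ∀ ω, (r ω x ∧ s ω y) ↔ (r ⊓ s) ω z := fun ω =>
        and_congr ⟨fun h => r.trans h (r.symm hzx), fun h => r.trans h hzx⟩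
          ⟨fun h => s.trans h (s.symm hzy), fun h => s.trans h hzy⟩
      calc ∑ ω with r ω x ∧ s ω y, p ω / classSum p (r ⊓ s) ω
          = ∑ ω with (r ⊓ s) ω z, p ω / classSum p (r ⊓ s) z := by
            refine sum_congr (filter_congr fun ω _ => class_eq ω) fun ω hω => ?_
            rw [classSum_congr (mem_filter.1 hω).2]
        _ = classSum p (r ⊓ s) z / classSum p (r ⊓ s) z := (sum_div ..).symm
        _ ≤ 1 := div_self_le_one _
  calc classSum (fun ω => p ω / classSum p (r ⊓ s) ω * classSum p s ω) r x
      = ∑ y, p y * ∑ ω with r ω x ∧ s ω y, p ω / classSum p (r ⊓ s) ω := by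
        simp only [classSum, mul_sum]
        rw [sum_comm' (t' := univ) (s' := fun y => univ.filter fun ω => r ω x ∧ s ω y)]
        · simp only [mul_comm]
        · simp [s.comm']
    _ ≤ ∑ y, p y * if t y x then 1 else 0 := by gcongr with y; exacts [hp y, class_le_one y]
    _ = classSum p t x := by simp [classSum, sum_filter]

/-- Submodularity of entropy: Gibbs' inequality for the joint law of `r` and `s` against the law
`P(r) P(s) / P(t)` making them conditionally independent given `t`. -/
lemma partitionEntropy_inf_add_le (hp : ∀ ω, 0 ≤ p ω) (hr : r ≤ t) (hs : s ≤ t) :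
    partitionEntropy p (r ⊓ s) + partitionEntropy p t ≤
      partitionEntropy p r + partitionEntropy p s := by
  classical
  set a := classSum p (r ⊓ s)
  set b := fun ω => p ω / a ω * classSum p s ω / classSum p t ω
  have class_le_one (x : Ω) : classSum b r x ≤ 1 := by
    have : classSum b r x =
        classSum (fun ω => p ω / a ω * classSum p s ω) r x / classSum p t x := by
      rw [classSum, classSum, sum_div]
      exact sum_congr rfl fun ω hω => by rw [← classSum_congr (hr (mem_filter.1 hω).2)]
    rw [this]
    exact div_le_one_of_le₀ (classSum_mul_div_le hp hr hs x) (classSum_nonneg hp x)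
  have mass_le : ∑ ω, b ω * classSum p r ω ≤ ∑ ω, p ω := by
    rw [sum_mul_classSum]
    exact sum_le_sum fun ω _ => mul_le_of_le_one_left (hp ω) (class_le_one ω)
  rw [← sub_nonneg, partitionEntropy_add_sub_add hp]
  refine (sub_nonneg.2 mass_le).trans ?_
  rw [← sum_sub_distrib]
  refine sum_le_sum fun ω _ => ?_
  rcases (hp ω).eq_or_lt with hω | hω
  · simp [b, ← hω]
  · have class_pos (v : Setoid Ω) : 0 < classSum p v ω := hω.trans_le (le_classSum hp ω)
    have := class_pos r
    have := class_pos s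
    have := class_pos t
    have : 0 < a ω := class_pos _
    calc p ω - b ω * classSum p r ω
        = p ω * (1 - (a ω * classSum p t ω / (classSum p r ω * classSum p s ω))⁻¹) := by
          simp only [b]; field_simp
      _ ≤ p ω * Real.log (a ω * classSum p t ω / (classSum p r ω * classSum p s ω)) := by
          gcongr; exact Real.one_sub_inv_le_log_of_pos (by positivity)

/-- The mutual information between the partitions `r` and `s`. -/
noncomputable def mutualInfo (p : Ω → ℝ) (r s : Setoid Ω) : ℝ :=
  partitionEntropy p r + partitionEntropy p s - partitionEntropy p (r ⊓ s)

lemma mutualInfo_le_of_le (hp : ∀ ω, 0 ≤ p ω) (hrt : r ≤ t) (hsu : s ≤ u) :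
    mutualInfo p t u ≤ mutualInfo p r s := by
  have refine_left := partitionEntropy_inf_add_le hp hrt (inf_le_left : t ⊓ u ≤ t)
  have refine_right := partitionEntropy_inf_add_le hp (inf_le_right : r ⊓ u ≤ u) hsu
  rw [← inf_assoc, inf_eq_left.2 hrt] at refine_left
  rw [inf_assoc, inf_eq_right.2 hsu] at refine_right
  rw [mutualInfo, mutualInfo]
  linarith

end PartitionEntropy

lemma condMI_eq_partitionEntropy {Ω A B C : Type} [Fintype Ω] [Fintype A] [Fintype B] [Fintype C]
    [DecidableEq A] [DecidableEq B] [DecidableEq C] {p : Ω → ℝ} (hp : ∀ ω, 0 ≤ p ω)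
    (f : Ω → A) (g : Ω → B) (h : Ω → C) :
    condMI p f g h =
      partitionEntropy p (Setoid.ker f ⊓ Setoid.ker h) +
          partitionEntropy p (Setoid.ker g ⊓ Setoid.ker h) -
        (partitionEntropy p (Setoid.ker f ⊓ (Setoid.ker g ⊓ Setoid.ker h)) +
          partitionEntropy p (Setoid.ker h)) := by
  classical
  have sum_values (L : A → B → C → ℝ) :
      ∑ a, ∑ b, ∑ c, (∑ ω with f ω = a ∧ g ω = b ∧ h ω = c, p ω) * L a b c =
        ∑ ω, p ω * L (f ω) (g ω) (h ω) := by
    rw [← sum_fiberwise univ (fun ω => (f ω, g ω, h ω))]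
    simp only [Fintype.sum_prod_type, Prod.mk.injEq, sum_mul]
    refine sum_congr rfl fun a _ => sum_congr rfl fun b _ => sum_congr rfl fun c _ =>
      sum_congr rfl fun ω hω => ?_
    obtain ⟨-, rfl, rfl, rfl⟩ := mem_filter.1 hω
    rfl
  rw [partitionEntropy_add_sub_add hp, condMI, sum_values]
  simp only [classSum, Setoid.inf_iff_and, Setoid.ker_def]

section PrefixPartition

variable {Ω A : Type*} {n k m i : ℕ}

/-- The partition of the sample space generated by the first `i` terms of the random sequence
`Z`; for `i > n` all `n` terms are used. -/
def prefixSetoid (Z : Fin n → Ω → A) (i : ℕ) : Setoid Ω where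
  r ω ω' := ∀ j : Fin n, (j : ℕ) < i → Z j ω = Z j ω'
  iseqv := ⟨fun _ _ _ => rfl, fun h j hj => (h j hj).symm,
    fun h h' j hj => (h j hj).trans (h' j hj)⟩

lemma prefixSetoid_iff {Z : Fin n → Ω → A} {ω ω' : Ω} :
    prefixSetoid Z i ω ω' ↔ ∀ j : Fin n, (j : ℕ) < i → Z j ω = Z j ω' := Iff.rfl

lemma prefixSetoid_zero (Z : Fin n → Ω → A) : prefixSetoid Z 0 = ⊤ := by
  ext ω ω'
  simp [prefixSetoid_iff, Setoid.top_def]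

lemma prefixSetoid_succ (Z : Fin n → Ω → A) (hi : i < n) :
    prefixSetoid Z (i + 1) = prefixSetoid Z i ⊓ Setoid.ker (Z ⟨i, hi⟩) := by
  ext ω ω'
  simp only [Setoid.inf_iff_and, prefixSetoid_iff, Setoid.ker_def]
  refine ⟨fun h => ⟨fun j hj => h j (by omega), h _ (Nat.lt_succ_self i)⟩, fun h j hj => ?_⟩
  rcases Nat.lt_succ_iff_lt_or_eq.1 hj with hj | rfl
  exacts [h.1 j hj, h.2]

lemma ker_prefix_eq_prefixSetoid (Z : Fin n → Ω → A) (hi : i ≤ n) :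
    Setoid.ker (fun ω (j : Fin i) => Z (j.castLE hi) ω) = prefixSetoid Z i := by
  ext ω ω'
  rw [Setoid.ker_def, funext_iff, prefixSetoid_iff]
  exact ⟨fun h j hj => h ⟨j, hj⟩, fun h j => h _ j.isLt⟩

lemma prefixSetoid_castAdd (Z : Fin (k + m) → Ω → A) (hi : i ≤ k) :
    prefixSetoid (fun j => Z (Fin.castAdd m j)) i = prefixSetoid Z i := by
  ext ω ω'
  simp only [prefixSetoid_iff]
  exact ⟨fun h j hj => h ⟨j, by omega⟩ hj, fun h j hj => h _ hj⟩

lemma prefixSetoid_add (Z : Fin (k + m) → Ω → A) (i : ℕ) :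
    prefixSetoid Z (k + i) =
      prefixSetoid (fun j => Z (Fin.castAdd m j)) k ⊓
        prefixSetoid (fun j => Z (Fin.natAdd k j)) i := by
  ext ω ω'
  simp only [prefixSetoid_iff, Fin.forall_fin_add, Fin.val_castAdd, Fin.val_natAdd,
    add_lt_add_iff_left, Setoid.inf_iff_and, Fin.is_lt, forall_const, and_congr_left_iff]
  exact fun _ => forall_congr' fun j => by simp [Nat.lt_add_right i j.isLt]

end PrefixPartition

section CausalEntropy

variable {Ω A B : Type*} [Fintype Ω] {n k m : ℕ} {p : Ω → ℝ}

/-- The causally conditioned entropy `H(X^n ‖ Y^{n-1}) = ∑ i, H(X_i | X^{i-1}, Y^{i-1})`. -/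
noncomputable def causalEntropy (p : Ω → ℝ) (X : Fin n → Ω → A) (Y : Fin n → Ω → B) : ℝ :=
  ∑ i ∈ range n, (partitionEntropy p (prefixSetoid X (i + 1) ⊓ prefixSetoid Y i) -
    partitionEntropy p (prefixSetoid X i ⊓ prefixSetoid Y i))

lemma causalEntropy_add (X : Fin (k + m) → Ω → A) (Y : Fin (k + m) → Ω → B)
    (h : ∀ t < m,
      partitionEntropy p (prefixSetoid X (k + t) ⊓ prefixSetoid Y (k + t)) +
          partitionEntropy p (prefixSetoid (fun j => X (Fin.natAdd k j)) (t + 1) ⊓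
            prefixSetoid (fun j => Y (Fin.natAdd k j)) t) =
        partitionEntropy p (prefixSetoid X (k + (t + 1)) ⊓ prefixSetoid Y (k + t)) +
          partitionEntropy p (prefixSetoid (fun j => X (Fin.natAdd k j)) t ⊓
            prefixSetoid (fun j => Y (Fin.natAdd k j)) t)) :
    causalEntropy p (fun j => X (Fin.castAdd m j)) (fun j => Y (Fin.castAdd m j)) +
        causalEntropy p (fun j => X (Fin.natAdd k j)) (fun j => Y (Fin.natAdd k j)) =
      causalEntropy p X Y := by
  simp only [causalEntropy]
  rw [sum_range_add]
  congr 1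
  · refine sum_congr rfl fun i hi => ?_
    have hi := mem_range.1 hi
    rw [prefixSetoid_castAdd X hi, prefixSetoid_castAdd X hi.le, prefixSetoid_castAdd Y hi.le]
  · refine sum_congr rfl fun t ht => ?_
    rw [add_assoc]
    linarith [h t (mem_range.1 ht)]

end CausalEntropy

section DirectedInformation

variable {Ω A B : Type} [Fintype Ω] [Fintype A] [Fintype B] [DecidableEq A] [DecidableEq B]
  {n k m : ℕ} {p : Ω → ℝ}

/-- The directed information `I(X^n → Y^n) = ∑ i, I(Y_i; X^i | Y^{i-1})` between two random
sequences; with indices counted from `0`, `X^i` consists of `X 0, …, X i`. -/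
noncomputable def directedInfo (p : Ω → ℝ) (X : Fin n → Ω → A) (Y : Fin n → Ω → B) : ℝ :=
  ∑ i : Fin n, condMI p (Y i) (fun ω (j : Fin (i + 1)) => X (j.castLE i.isLt) ω)
    (fun ω (j : Fin i) => Y (j.castLE i.isLt.le) ω)

/-- Kim's identity. -/
lemma directedInfo_eq_causalEntropy (hp : ∀ ω, 0 ≤ p ω) (X : Fin n → Ω → A) (Y : Fin n → Ω → B) :
    directedInfo p X Y =
      partitionEntropy p (prefixSetoid Y n) + causalEntropy p X Y -
        partitionEntropy p (prefixSetoid X n ⊓ prefixSetoid Y n) := by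
  set D : ℕ → ℝ := fun i => partitionEntropy p (prefixSetoid Y i) -
    partitionEntropy p (prefixSetoid X i ⊓ prefixSetoid Y i) with hD
  have term (i : Fin n) :
      condMI p (Y i) (fun ω (j : Fin (i + 1)) => X (j.castLE i.isLt) ω)
          (fun ω (j : Fin i) => Y (j.castLE i.isLt.le) ω) =
        (D (i + 1) - D i) +
          (partitionEntropy p (prefixSetoid X (i + 1) ⊓ prefixSetoid Y i) -
            partitionEntropy p (prefixSetoid X i ⊓ prefixSetoid Y i)) := by
    rw [condMI_eq_partitionEntropy hp, ker_prefix_eq_prefixSetoid X i.isLt,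
      ker_prefix_eq_prefixSetoid Y i.isLt.le, inf_left_comm, inf_comm (Setoid.ker _),
      ← prefixSetoid_succ Y i.isLt]
    ring
  have D_zero : D 0 = 0 := by simp [hD, prefixSetoid_zero]
  rw [directedInfo, sum_congr rfl fun i _ => term i, sum_add_distrib,
    Fin.sum_univ_eq_sum_range (fun i => D (i + 1) - D i), sum_range_sub, D_zero,
    Fin.sum_univ_eq_sum_range fun i =>
      partitionEntropy p (prefixSetoid X (i + 1) ⊓ prefixSetoid Y i) -
        partitionEntropy p (prefixSetoid X i ⊓ prefixSetoid Y i), ← causalEntropy]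
  ring

lemma directedInfo_add_le (hp : ∀ ω, 0 ≤ p ω) (X : Fin (k + m) → Ω → A) (Y : Fin (k + m) → Ω → B)
    (hX : causalEntropy p (fun j => X (Fin.castAdd m j)) (fun j => Y (Fin.castAdd m j)) +
      causalEntropy p (fun j => X (Fin.natAdd k j)) (fun j => Y (Fin.natAdd k j)) ≤
        causalEntropy p X Y) :
    directedInfo p (fun j => X (Fin.castAdd m j)) (fun j => Y (Fin.castAdd m j)) +
      directedInfo p (fun j => X (Fin.natAdd k j)) (fun j => Y (Fin.natAdd k j)) ≤
        directedInfo p X Y := by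
  have data_processing := mutualInfo_le_of_le hp
    (inf_le_right : prefixSetoid (fun j => X (Fin.castAdd m j)) k ⊓
      prefixSetoid (fun j => Y (Fin.castAdd m j)) k ≤ _)
    (inf_le_right : prefixSetoid (fun j => X (Fin.natAdd k j)) m ⊓
      prefixSetoid (fun j => Y (Fin.natAdd k j)) m ≤ _)
  rw [mutualInfo, mutualInfo, inf_inf_inf_comm, ← prefixSetoid_add, ← prefixSetoid_add]
    at data_processing
  rw [directedInfo_eq_causalEntropy hp, directedInfo_eq_causalEntropy hp,
    directedInfo_eq_causalEntropy hp]
  linarith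

end DirectedInformation

section PrefixSum

variable {α β : Type*} [Fintype α] [Fintype β] {n : ℕ}

/-- The sum of `F` over the sequences that agree with `x` in the first `i` terms, i.e. the marginal
`F(x^i)`. -/
noncomputable def prefixSum (F : (Fin n → α) → ℝ) (i : ℕ) (x : Fin n → α) : ℝ :=
  classSum F (prefixSetoid (fun j x => x j) i) x

/-- The sum of `p` over the pairs of sequences that agree with `x` in the first `i` terms and with
`y` in the first `l` terms, i.e. the marginal `p(x^i, y^l)`. -/
noncomputable def jointPrefixSum (p : (Fin n → α) × (Fin n → β) → ℝ) (i l : ℕ) (x : Fin n → α)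
    (y : Fin n → β) : ℝ :=
  classSum p (prefixSetoid (fun j ω => ω.1 j) i ⊓ prefixSetoid (fun j ω => ω.2 j) l) (x, y)

lemma prefixSum_eq_sum_filter [DecidableEq α] (F : (Fin n → α) → ℝ) (i : ℕ) (x : Fin n → α) :
    prefixSum F i x = ∑ x' with ∀ j : Fin n, (j : ℕ) < i → x' j = x j, F x' := by
  simp only [prefixSum, classSum, prefixSetoid_iff]

lemma prefixSum_self (F : (Fin n → α) → ℝ) (x : Fin n → α) : prefixSum F n x = F x :=
  classSum_eq_self F fun _ h => funext fun j => h j j.isLt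

lemma jointPrefixSum_self (p : (Fin n → α) × (Fin n → β) → ℝ) (x : Fin n → α) (y : Fin n → β) :
    jointPrefixSum p n n x y = p (x, y) :=
  classSum_eq_self p fun _ h =>
    Prod.ext (funext fun j => h.1 j j.isLt) (funext fun j => h.2 j j.isLt)

lemma prefixSum_succ (F : (Fin n → α) → ℝ) {i : ℕ} (hi : i < n) (x : Fin n → α) :
    prefixSum F i x = ∑ v, prefixSum F (i + 1) (Function.update x ⟨i, hi⟩ v) := by
  simp only [prefixSum, prefixSetoid_succ _ hi]
  exact classSum_eq_sum_inf_ker F _ _ _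
    (fun v j hj => Function.update_of_ne (Fin.ne_of_lt hj) v x) (by simp)

lemma jointPrefixSum_succ_left (p : (Fin n → α) × (Fin n → β) → ℝ) {i : ℕ} (hi : i < n) (l : ℕ)
    (x : Fin n → α) (y : Fin n → β) :
    jointPrefixSum p i l x y =
      ∑ v, jointPrefixSum p (i + 1) l (Function.update x ⟨i, hi⟩ v) y := by
  simp only [jointPrefixSum, prefixSetoid_succ _ hi, inf_right_comm _ (Setoid.ker _)]
  exact classSum_eq_sum_inf_ker p _ _ (fun v => (Function.update x ⟨i, hi⟩ v, y))
    (fun v => ⟨fun j hj => Function.update_of_ne (Fin.ne_of_lt hj) v x, fun _ _ => rfl⟩) (by simp)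

lemma jointPrefixSum_succ_right (p : (Fin n → α) × (Fin n → β) → ℝ) (i : ℕ) {l : ℕ} (hl : l < n)
    (x : Fin n → α) (y : Fin n → β) :
    jointPrefixSum p i l x y =
      ∑ v, jointPrefixSum p i (l + 1) x (Function.update y ⟨l, hl⟩ v) := by
  simp only [jointPrefixSum, prefixSetoid_succ _ hl, ← inf_assoc]
  exact classSum_eq_sum_inf_ker p _ _ (fun v => (x, Function.update y ⟨l, hl⟩ v))
    (fun v => ⟨fun _ _ => rfl, fun j hj => Function.update_of_ne (Fin.ne_of_lt hj) v y⟩) (by simp)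

/-- For every `i ≥ k`, the marginal `Q(x^i | y)` depends on `y` only through `y_j` with
`j + d < i`. A causal input distribution has delay `d = 1`, a causal channel has delay `d = 0`. -/
def IsCausalFrom (k d : ℕ) (Q : (Fin n → α) → (Fin n → β) → ℝ) : Prop :=
  ∀ i, k ≤ i → i ≤ n → ∀ x y y', (∀ j : Fin n, (j : ℕ) + d < i → y j = y' j) →
    prefixSum (Q · y) i x = prefixSum (Q · y') i x

section Factorization

variable {k i : ℕ} {p : (Fin n → α) × (Fin n → β) → ℝ} {Q : (Fin n → α) → (Fin n → β) → ℝ}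
  {P : (Fin n → β) → (Fin n → α) → ℝ}

lemma jointPrefixSum_succ_self_of_succ_succ (hQ : IsCausalFrom (k + 1) 1 Q) (hk : k ≤ i)
    (hi : i < n)
    (h : ∀ x y, jointPrefixSum p (i + 1) (i + 1) x y =
      prefixSum (Q · y) (i + 1) x * prefixSum (P · x) (i + 1) y)
    (x : Fin n → α) (y : Fin n → β) :
    jointPrefixSum p (i + 1) i x y = prefixSum (Q · y) (i + 1) x * prefixSum (P · x) i y := by
  rw [jointPrefixSum_succ_right p _ hi, prefixSum_succ _ hi, mul_sum]
  refine sum_congr rfl fun v _ => ?_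
  rw [h, hQ (i + 1) (by omega) hi x _ y fun j hj =>
    Function.update_of_ne (Fin.ne_of_lt (Nat.lt_of_succ_lt_succ hj)) v y]

lemma jointPrefixSum_self_of_succ_self (hP : IsCausalFrom k 0 P) (hk : k ≤ i) (hi : i < n)
    (h : ∀ x y, jointPrefixSum p (i + 1) i x y =
      prefixSum (Q · y) (i + 1) x * prefixSum (P · x) i y)
    (x : Fin n → α) (y : Fin n → β) :
    jointPrefixSum p i i x y = prefixSum (Q · y) i x * prefixSum (P · x) i y := by
  rw [jointPrefixSum_succ_left p hi, prefixSum_succ _ hi, sum_mul]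
  refine sum_congr rfl fun v _ => ?_
  rw [h, hP i hk hi.le y _ x fun j hj => Function.update_of_ne (Fin.ne_of_lt hj) v x]

lemma jointPrefixSum_eq_mul (hQ : IsCausalFrom (k + 1) 1 Q) (hP : IsCausalFrom k 0 P)
    (hfact : ∀ x y, p (x, y) = Q x y * P y x) (hk : k ≤ i) (hi : i ≤ n) (x : Fin n → α)
    (y : Fin n → β) :
    jointPrefixSum p i i x y = prefixSum (Q · y) i x * prefixSum (P · x) i y := by
  induction hi using Nat.decreasingInduction generalizing x y with
  | self => rw [jointPrefixSum_self, prefixSum_self, prefixSum_self, hfact]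
  | of_succ i hi ih =>
    exact jointPrefixSum_self_of_succ_self hP hk hi
      (jointPrefixSum_succ_self_of_succ_succ hQ hk hi (ih (by omega))) x y

lemma jointPrefixSum_succ_eq_mul (hQ : IsCausalFrom (k + 1) 1 Q) (hP : IsCausalFrom k 0 P)
    (hfact : ∀ x y, p (x, y) = Q x y * P y x) (hk : k ≤ i) (hi : i < n) (x : Fin n → α)
    (y : Fin n → β) :
    jointPrefixSum p (i + 1) i x y = prefixSum (Q · y) (i + 1) x * prefixSum (P · x) i y :=
  jointPrefixSum_succ_self_of_succ_succ hQ hk hi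
    (jointPrefixSum_eq_mul hQ hP hfact (by omega) hi) x y

end Factorization

end PrefixSum

section Blocks

variable {α β : Type*} [Fintype α] {k m : ℕ}

lemma prefixSum_mul_blocks (c : (Fin k → α) → ℝ) (F : (Fin m → α) → ℝ) (t : ℕ)
    (x : Fin (k + m) → α) :
    prefixSum (fun x' => c (x' ∘ Fin.castAdd m) * F (x' ∘ Fin.natAdd k)) (k + t) x =
      c (x ∘ Fin.castAdd m) * prefixSum F t (x ∘ Fin.natAdd k) := by
  classical
  have mem_class (x' : Fin (k + m) → α) :
      (∀ j : Fin (k + m), (j : ℕ) < k + t → x' j = x j) ↔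
        x' ∘ Fin.castAdd m = x ∘ Fin.castAdd m ∧
          ∀ j : Fin m, (j : ℕ) < t → (x' ∘ Fin.natAdd k) j = (x ∘ Fin.natAdd k) j := by
    simp only [Fin.forall_fin_add, Fin.val_castAdd, Fin.val_natAdd, funext_iff, Function.comp_apply,
      Nat.add_lt_add_iff_left]
    exact and_congr_left fun _ => forall_congr' fun j => by simp [Nat.lt_add_right t j.isLt]
  simp only [prefixSum_eq_sum_filter, mem_class, mul_sum]
  refine sum_nbij' (· ∘ Fin.natAdd k) (Fin.append (x ∘ Fin.castAdd m)) ?_ ?_ ?_ ?_ ?_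
  · simp +contextual
  · simp +contextual [funext_iff]
  · intro x' hx'
    rw [← (mem_filter.1 hx').2.1]
    exact Fin.append_castAdd_natAdd
  · exact fun z _ => funext (Fin.append_right _ z)
  · intro x' hx'
    rw [(mem_filter.1 hx').2.1]

lemma IsCausalFrom.mul_blocks (Qa : (Fin k → α) → (Fin k → β) → ℝ)
    {Qb : (Fin m → α) → (Fin m → β) → ℝ} (hQb : IsCausalFrom 0 1 Qb) :
    IsCausalFrom (k + 1) 1 fun (x : Fin (k + m) → α) (y : Fin (k + m) → β) =>
      Qa (x ∘ Fin.castAdd m) (y ∘ Fin.castAdd m) * Qb (x ∘ Fin.natAdd k) (y ∘ Fin.natAdd k) := by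
  intro i hki hi x y y' hy
  obtain ⟨t, rfl⟩ := Nat.exists_eq_add_of_le (Nat.le_of_succ_le hki)
  have heads_eq : y ∘ Fin.castAdd m = y' ∘ Fin.castAdd m :=
    funext fun j => hy _ (by rw [Fin.val_castAdd]; omega)
  rw [prefixSum_mul_blocks (Qa · _) (Qb · _), prefixSum_mul_blocks (Qa · _) (Qb · _), heads_eq,
    hQb t (Nat.zero_le t) (by omega) _ (y ∘ Fin.natAdd k) (y' ∘ Fin.natAdd k) fun j hj =>
      hy _ (by rw [Fin.val_natAdd]; omega)]

variable [Fintype β]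

lemma classSum_natAdd_eq_sum_jointPrefixSum
    (p : (Fin (k + m) → α) × (Fin (k + m) → β) → ℝ) (s t : ℕ) (x : Fin (k + m) → α)
    (y : Fin (k + m) → β) :
    classSum p (prefixSetoid (fun j ω => ω.1 (Fin.natAdd k j)) s ⊓
        prefixSetoid (fun j ω => ω.2 (Fin.natAdd k j)) t) (x, y) =
      ∑ w : (Fin k → α) × (Fin k → β), jointPrefixSum p (k + s) (k + t)
        (Fin.append w.1 (x ∘ Fin.natAdd k)) (Fin.append w.2 (y ∘ Fin.natAdd k)) := by
  have split : prefixSetoid (fun j ω => ω.1 j) (k + s) ⊓ prefixSetoid (fun j ω => ω.2 j) (k + t) =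
      prefixSetoid (fun j ω => ω.1 (Fin.natAdd k j)) s ⊓
          prefixSetoid (fun j ω => ω.2 (Fin.natAdd k j)) t ⊓
        Setoid.ker fun ω : (Fin (k + m) → α) × (Fin (k + m) → β) =>
          (ω.1 ∘ Fin.castAdd m, ω.2 ∘ Fin.castAdd m) := by
    rw [prefixSetoid_add, prefixSetoid_add, inf_inf_inf_comm, inf_comm]
    congr 1
    ext ω ω'
    simp [Setoid.inf_iff_and, Setoid.ker_def, prefixSetoid_iff, funext_iff]
  simp only [jointPrefixSum, split]
  refine classSum_eq_sum_inf_ker p _ (fun ω => (ω.1 ∘ Fin.castAdd m, ω.2 ∘ Fin.castAdd m))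
    (fun w => (Fin.append w.1 (x ∘ Fin.natAdd k), Fin.append w.2 (y ∘ Fin.natAdd k)))
    (fun w => ⟨fun j _ => ?_, fun j _ => ?_⟩)
    fun w => Prod.ext (funext fun j => ?_) (funext fun j => ?_)
  · exact Fin.append_right w.1 _ j
  · exact Fin.append_right w.2 _ j
  · exact Fin.append_left w.1 _ j
  · exact Fin.append_left w.2 _ j

lemma causalEntropy_add_of_blocks {p : (Fin (k + m) → α) × (Fin (k + m) → β) → ℝ}
    (hp : ∀ ω, 0 ≤ p ω) (Qa : (Fin k → α) → (Fin k → β) → ℝ)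
    {Qb : (Fin m → α) → (Fin m → β) → ℝ} {P : (Fin (k + m) → β) → (Fin (k + m) → α) → ℝ}
    (hQb : IsCausalFrom 0 1 Qb) (hP : IsCausalFrom k 0 P)
    (hfact : ∀ x y, p (x, y) =
      Qa (x ∘ Fin.castAdd m) (y ∘ Fin.castAdd m) * Qb (x ∘ Fin.natAdd k) (y ∘ Fin.natAdd k) *
        P y x) :
    causalEntropy p (fun j ω => ω.1 (Fin.castAdd m j)) (fun j ω => ω.2 (Fin.castAdd m j)) +
        causalEntropy p (fun j ω => ω.1 (Fin.natAdd k j)) (fun j ω => ω.2 (Fin.natAdd k j)) =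
      causalEntropy p (fun j ω => ω.1 j) (fun j ω => ω.2 j) := by
  refine causalEntropy_add (fun j (ω : (Fin (k + m) → α) × (Fin (k + m) → β)) => ω.1 j)
    (fun j ω => ω.2 j) fun t ht => ?_
  refine partitionEntropy_add_eq hp ?_
  rintro ⟨x, y⟩
  have hQ := hQb.mul_blocks Qa
  have past_eq (x y) : jointPrefixSum p (k + t) (k + t) x y =
      Qa (x ∘ Fin.castAdd m) (y ∘ Fin.castAdd m) *
        prefixSum (Qb · (y ∘ Fin.natAdd k)) t (x ∘ Fin.natAdd k) * prefixSum (P · x) (k + t) y := by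
    rw [jointPrefixSum_eq_mul hQ hP hfact (by omega) (by omega),
      prefixSum_mul_blocks (Qa · _) (Qb · _)]
  have next_eq (x y) : jointPrefixSum p (k + (t + 1)) (k + t) x y =
      Qa (x ∘ Fin.castAdd m) (y ∘ Fin.castAdd m) *
        prefixSum (Qb · (y ∘ Fin.natAdd k)) (t + 1) (x ∘ Fin.natAdd k) *
          prefixSum (P · x) (k + t) y := by
    rw [← add_assoc, jointPrefixSum_succ_eq_mul hQ hP hfact (by omega) (by omega), add_assoc,
      prefixSum_mul_blocks (Qa · _) (Qb · _)]
  rw [classSum_natAdd_eq_sum_jointPrefixSum, classSum_natAdd_eq_sum_jointPrefixSum,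
    ← jointPrefixSum, ← jointPrefixSum, mul_sum, mul_sum]
  refine sum_congr rfl fun w _ => ?_
  have tail_x : Fin.append w.1 (x ∘ Fin.natAdd k) ∘ Fin.natAdd k = x ∘ Fin.natAdd k :=
    funext (Fin.append_right w.1 _)
  have tail_y : Fin.append w.2 (y ∘ Fin.natAdd k) ∘ Fin.natAdd k = y ∘ Fin.natAdd k :=
    funext (Fin.append_right w.2 _)
  simp only [past_eq, next_eq, tail_x, tail_y]
  ring

end Blocks

lemma IsCausalIn.isCausalFrom {X Y : Type} [Fintype X] [DecidableEq X] [Fintype Y] {n : ℕ}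
    {Q : (Fin n → X) → (Fin n → Y) → ℝ} (hQ : IsCausalIn n Q) (k : ℕ) : IsCausalFrom k 1 Q := by
  intro i _ hi x y y' hy
  simpa only [prefixSum_eq_sum_filter] using hQ.2.2 i hi x y y' hy

lemma IsCausalCh.isCausalFrom {X Y : Type} [Fintype X] [Fintype Y] [DecidableEq Y] {n : ℕ}
    {P : (Fin n → Y) → (Fin n → X) → ℝ} (hP : IsCausalCh n P) (k : ℕ) : IsCausalFrom k 0 P := by
  intro i _ hi y x x' hx
  simpa only [prefixSum_eq_sum_filter] using hP.2.2 i hi y x x' hx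

theorem di_block_superadditive_general {X Y : Type} [Fintype X] [DecidableEq X]
    [Fintype Y] [DecidableEq Y] {n k m : ℕ} (hn : k + m = n)
    {p : (Fin n → X) × (Fin n → Y) → ℝ} (hp : ∀ ω, 0 ≤ p ω)
    (Qa : (Fin k → X) → (Fin k → Y) → ℝ) {Qb : (Fin m → X) → (Fin m → Y) → ℝ}
    {P : (Fin n → Y) → (Fin n → X) → ℝ} (hQb : IsCausalFrom 0 1 Qb) (hP : IsCausalFrom k 0 P)
    (hfact : ∀ x y, p (x, y) =
      Qa (fun j => x ⟨j, by omega⟩) (fun j => y ⟨j, by omega⟩) *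
        Qb (fun j => x ⟨k + j, by omega⟩) (fun j => y ⟨k + j, by omega⟩) * P y x) :
    directedInfo p (fun (j : Fin k) ω => ω.1 ⟨j, by omega⟩)
        (fun (j : Fin k) ω => ω.2 ⟨j, by omega⟩) +
      directedInfo p (fun (j : Fin m) ω => ω.1 ⟨k + j, by omega⟩)
        (fun (j : Fin m) ω => ω.2 ⟨k + j, by omega⟩) ≤
      directedInfo p (fun j ω => ω.1 j) (fun j ω => ω.2 j) := by
  subst hn
  exact directedInfo_add_le hp (fun j ω => ω.1 j) (fun j ω => ω.2 j)
    (causalEntropy_add_of_blocks hp Qa hQb hP hfact).le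

/-- Block superadditivity of directed information (Lemma 6 of the paper): if the joint
distribution factors as
`p(x^n,y^n) = Qa(x_1^k ‖ y_1^{k-1}) Qb(x_{k+1}^n ‖ y_{k+1}^{n-1}) P(y^n ‖ x^n)`,
then `I(X^n → Y^n) ≥ I(X^k → Y^k) + I(X_{k+1}^n → Y_{k+1}^n)`. -/
theorem di_block_superadditive {X Y : Type} [Fintype X] [DecidableEq X]
    [Fintype Y] [DecidableEq Y]
    (n k : ℕ) (hk : k ≤ n)
    (p : (Fin n → X) × (Fin n → Y) → ℝ)
    (Qa : (Fin k → X) → (Fin k → Y) → ℝ)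
    (Qb : (Fin (n - k) → X) → (Fin (n - k) → Y) → ℝ)
    (Pch : (Fin n → Y) → (Fin n → X) → ℝ)
    (hQa : IsCausalIn k Qa) (hQb : IsCausalIn (n - k) Qb) (hPch : IsCausalCh n Pch)
    (hfact : ∀ x y, p (x, y) =
      Qa (fun j : Fin k => x ⟨j.val, by have := j.isLt; omega⟩)
         (fun j : Fin k => y ⟨j.val, by have := j.isLt; omega⟩) *
      Qb (fun j : Fin (n - k) => x ⟨k + j.val, by have := j.isLt; omega⟩)
         (fun j : Fin (n - k) => y ⟨k + j.val, by have := j.isLt; omega⟩) *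
      Pch y x) :
    (∑ i : Fin k,
        condMI p (fun ω => ω.2 ⟨i.val, by have := i.isLt; omega⟩)
          (fun ω => fun j : Fin (i.val + 1) =>
            ω.1 ⟨j.val, by have h1 := j.isLt; have h2 := i.isLt; omega⟩)
          (fun ω => fun j : Fin i.val =>
            ω.2 ⟨j.val, by have h1 := j.isLt; have h2 := i.isLt; omega⟩)) +
      (∑ i : Fin (n - k),
        condMI p (fun ω => ω.2 ⟨k + i.val, by have := i.isLt; omega⟩)
          (fun ω => fun j : Fin (i.val + 1) =>
            ω.1 ⟨k + j.val, by have h1 := j.isLt; have h2 := i.isLt; omega⟩)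
          (fun ω => fun j : Fin i.val =>
            ω.2 ⟨k + j.val, by have h1 := j.isLt; have h2 := i.isLt; omega⟩)) ≤
    ∑ i : Fin n,
        condMI p (fun ω => ω.2 i)
          (fun ω => fun j : Fin (i.val + 1) =>
            ω.1 ⟨j.val, by have h1 := j.isLt; have h2 := i.isLt; omega⟩)
          (fun ω => fun j : Fin i.val =>
            ω.2 ⟨j.val, by have h1 := j.isLt; have h2 := i.isLt; omega⟩) := by
  have hp : ∀ ω, 0 ≤ p ω := fun ω => by
    rw [← ω.eta, hfact]
    exact mul_nonneg (mul_nonneg (hQa.1 _ _) (hQb.1 _ _)) (hPch.1 _ _)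
  exact di_block_superadditive_general (Nat.add_sub_cancel' hk) hp Qa (hQb.isCausalFrom 0)
    (hPch.isCausalFrom k) hfact
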